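/- Let X be a proper, geodesic Ptolemy metric space. Then any two points x, y ∈ X have a unique midpoint m(x,y) ∈ X (a point m with |xm| = |my| = |xy|/2), and the resulting midpoint map m : X × X → X is continuous. -/

import Mathlib

/-!
Existence of midpoints is immediate from geodesics, and continuity of the midpoint map follows from
uniqueness by compactness: a limit of midpoints is a midpoint. The content is uniqueness.

Suppose `x, y` have midpoints `m₀ ≠ m₁`. Let `p, q : [0, 1] → X` be geodesics from `x` to `m₀`
and to `m₁`, both of speed `l = |x m₀| = |x m₁|`, and let `w t` be a midpoint of `p t` and `q t`.
Distance functions are convex in a geodesic Ptolemy space, so `|x w t| ≤ l t` and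
`|w t y| ≤ l (2 - t)`; hence `|x w t| = l t`. Thus `p t, w t, q t` lie on one sphere about `x`.

* Kink (`slope_kink`). The triangle inequality compares the right slopes at `t` of the distances
  from `w t` and from `q t` to `p`. The Ptolemy inequality with fourth vertex `x` (the triangle
  inequality for the metric inverted at `x`) compares their left slopes, and there it is better than
  the triangle inequality. Since the distance from `q t` is convex along `p`, the distance from
  `w t` must have a kink at `t`, of size at least `|p t w t|`, bounded below for `t` near `1`.
* Stability (`slope_stable`). By the Ptolemy inequality the slopes along `p` of the distances from
  two nearby points are close, uniformly in the length of the subinterval.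

By properness there are `t 0 < t 1 < ⋯` near `1` such that the points `w (t n)` are as close to
each other as desired. The slope over `[t n, t (n + 1)]` of the distance from `w (t (n + 1))` then
grows by a fixed amount at every step, although all slopes are bounded by `l`.
-/

/-- A metric space is Ptolemy if `|xy|·|uv| ≤ |xu|·|yv| + |xv|·|yu|` for all points. -/
def IsPtolemy (X : Type*) [MetricSpace X] : Prop :=
  ∀ x y u v : X, dist x y * dist u v ≤ dist x u * dist y v + dist x v * dist y u

/-- `c` is a geodesic on `I` (parameterized proportionally to arclength with speed `l ≥ 0`). -/
def IsGeodesicOn {X : Type*} [MetricSpace X] (c : ℝ → X) (I : Set ℝ) : Prop :=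
  ∃ l : ℝ, 0 ≤ l ∧ ∀ s ∈ I, ∀ t ∈ I, dist (c s) (c t) = l * |s - t|

/-- A metric space is geodesic if every pair of points is joined by a geodesic. -/
def IsGeodesicSpace (X : Type*) [MetricSpace X] : Prop :=
  ∀ x y : X, ∃ c : ℝ → X, c 0 = x ∧ c 1 = y ∧ IsGeodesicOn c (Set.Icc 0 1)

open Filter Topology

section Aux

variable {X : Type*} [MetricSpace X]

/-- Distance functions are convex at midpoints. -/
lemma IsPtolemy.dist_midpoint_le (hpt : IsPtolemy X) {a b w z : X}
    (h1 : dist a w = dist a b / 2) (h2 : dist w b = dist a b / 2) :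
    dist z w ≤ (dist z a + dist z b) / 2 := by
  rcases eq_or_lt_of_le (dist_nonneg (x := a) (y := b)) with h | h
  · have haw : a = w := dist_eq_zero.1 (by rw [h1, ← h]; simp)
    have hwb : w = b := dist_eq_zero.1 (by rw [h2, ← h]; simp)
    subst haw; subst hwb
    linarith
  · have := hpt z w a b
    rw [h2, dist_comm w a, h1] at this
    refine le_of_mul_le_mul_right (this.trans (le_of_eq ?_)) h
    ring

lemma IsGeodesicSpace.exists_midpoint (hgeo : IsGeodesicSpace X) (x y : X) :
    ∃ z, dist x z = dist x y / 2 ∧ dist z y = dist x y / 2 := by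
  obtain ⟨c, rfl, rfl, l, -, hc⟩ := hgeo x y
  refine ⟨c (1 / 2), ?_, ?_⟩ <;>
  · rw [hc _ (by norm_num) _ (by norm_num), hc 0 (by norm_num) 1 (by norm_num)]
    norm_num [abs_of_pos]
    try ring

/-- A geodesic from `x` to `y` has speed `dist x y`. -/
lemma IsGeodesicSpace.exists_geodesic (hgeo : IsGeodesicSpace X) (x y : X) :
    ∃ c : ℝ → X, c 0 = x ∧ c 1 = y ∧
      ∀ s ∈ Set.Icc (0 : ℝ) 1, ∀ t ∈ Set.Icc (0 : ℝ) 1, dist (c s) (c t) = dist x y * |s - t| := by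
  obtain ⟨c, h0, h1, l, -, hc⟩ := hgeo x y
  refine ⟨c, h0, h1, ?_⟩
  have : dist x y = l := by
    rw [← h0, ← h1, hc 0 (by norm_num) 1 (by norm_num)]; norm_num
  rwa [this]

/-- If `w` is a midpoint of `p t` and `q`, all three on the sphere of radius `l * t` about `p 0`,
then the distance from `w` has along `p` a kink at `t` of size at least `dist (p t) w`. -/
lemma IsPtolemy.slope_kink (hpt : IsPtolemy X) {p : ℝ → X} {l : ℝ} (hl : 0 < l)
    (hp : ∀ s ∈ Set.Icc (0 : ℝ) 1, ∀ t ∈ Set.Icc (0 : ℝ) 1, dist (p s) (p t) = l * |s - t|)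
    {s t u r : ℝ} (hs : 0 ≤ s) (hst : s < t) (htu : t < u) (hu : u ≤ 1) {q w : X}
    (hq : dist (p 0) q = l * t) (hw : dist (p 0) w = l * t)
    (h1 : dist (p t) w = r) (h2 : dist w q = r) (h3 : dist (p t) q = 2 * r) :
    (dist (p t) w - dist (p s) w) / (t - s) + r ≤ (dist (p u) w - dist (p t) w) / (u - t) := by
  have ht : 0 < t := hs.trans_lt hst
  have hr : 0 ≤ r := h1 ▸ dist_nonneg
  have hs' : s ∈ Set.Icc (0 : ℝ) 1 := ⟨hs, by linarith⟩
  have ht' : t ∈ Set.Icc (0 : ℝ) 1 := ⟨ht.le, by linarith⟩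
  have hu' : u ∈ Set.Icc (0 : ℝ) 1 := ⟨by linarith, hu⟩
  have h0' : (0 : ℝ) ∈ Set.Icc (0 : ℝ) 1 := by norm_num
  have right : dist (p u) q ≤ dist (p u) w + r := h2 ▸ dist_triangle _ _ _
  have left : dist (p s) q * t ≤ dist (p s) w * t + r * s := by
    have := hpt (p s) q (p 0) w
    rw [hw, hp s hs' 0 h0', dist_comm q w, h2, dist_comm q, hq, sub_zero, abs_of_nonneg hs] at this
    refine le_of_mul_le_mul_left (le_of_eq_of_le ?_ (this.trans (le_of_eq ?_))) hl <;> ring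
  have conv : 2 * r * (u - s) ≤ dist (p s) q * (u - t) + dist (p u) q * (t - s) := by
    have := hpt q (p t) (p s) (p u)
    rw [hp s hs' u hu', hp t ht' u hu', hp t ht' s hs', dist_comm q (p t), h3, dist_comm q,
      dist_comm q, abs_of_neg (by linarith : s - u < 0), abs_of_neg (by linarith : t - u < 0),
      abs_of_pos (by linarith : 0 < t - s)] at this
    refine le_of_mul_le_mul_left (le_of_eq_of_le ?_ (this.trans (le_of_eq ?_))) hl <;> ring
  -- Division of `left` by `t`; since `t ≤ 1`, the gain `r * (t - s) / t` is at least `r * (t - s)`.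
  have left' : dist (p s) q ≤ dist (p s) w + r - r * (t - s) := by
    refine le_of_mul_le_mul_right (left.trans ?_) ht
    nlinarith [mul_nonneg (mul_nonneg hr (sub_nonneg.2 hst.le)) (sub_nonneg.2 ht'.2)]
  have hts : 0 < t - s := by linarith
  have hut : 0 < u - t := by linarith
  rw [h1, div_add' _ _ _ hts.ne', div_le_div_iff₀ hts hut]
  nlinarith [mul_le_mul_of_nonneg_right left' hut.le, mul_le_mul_of_nonneg_right right hts.le]

/-- The slopes along `p` of the distances from two nearby points are close. -/
lemma IsPtolemy.slope_stable (hpt : IsPtolemy X) {p : ℝ → X} {l : ℝ} (hl : 0 < l)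
    (hp : ∀ s ∈ Set.Icc (0 : ℝ) 1, ∀ t ∈ Set.Icc (0 : ℝ) 1, dist (p s) (p t) = l * |s - t|)
    {t u ρ : ℝ} (ht : 0 ≤ t) (htu : t < u) (hu : u ≤ 1) (hρ : 0 < ρ) {v w : X}
    (hw : ρ ≤ dist (p t) w) (hvw : dist w v ≤ ρ ^ 2 / (4 * l)) :
    (dist (p u) w - dist (p t) w) / (u - t) - ρ / 2 ≤ (dist (p u) v - dist (p t) v) / (u - t) := by
  have hut : 0 < u - t := by linarith
  have hputu : dist (p u) (p t) = l * (u - t) := by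
    rw [hp u ⟨by linarith, hu⟩ t ⟨ht, by linarith⟩, abs_of_pos hut]
  have hpto := hpt (p u) w (p t) v
  rw [hputu, dist_comm w (p t)] at hpto
  have habs : |dist (p u) w - dist (p t) w| ≤ l * (u - t) := by
    rw [← hputu]; exact abs_dist_sub_le _ _ _
  have hvw' : |dist (p t) w - dist (p t) v| ≤ dist w v := by
    rw [dist_comm (p t), dist_comm (p t)]; exact abs_dist_sub_le _ _ _
  have hd : dist w v * l ≤ ρ ^ 2 / 4 := by
    rw [le_div_iff₀ (by positivity)] at hvw
    linarith
  set a := dist (p t) w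
  set b := dist (p t) v
  set A := dist (p u) w
  set B := dist (p u) v
  have key : (A - a) * (a - b) ≤ l * (u - t) * dist w v :=
    (le_abs_self _).trans (by rw [abs_mul]; gcongr)
  -- Ptolemy bounds `A * b - a * B`, hence the difference of the slopes times `a`.
  have hfin : ((A - a) - (B - b)) * a ≤ (ρ / 2 * (u - t)) * ρ := by
    nlinarith [mul_le_mul_of_nonneg_right hd hut.le]
  have hfin' : (A - a) - (B - b) ≤ ρ / 2 * (u - t) := by
    have h0 : 0 ≤ ρ / 2 * (u - t) := by positivity
    refine le_of_mul_le_mul_right (hfin.trans ?_) (hρ.trans_le hw)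
    gcongr
  rw [sub_le_iff_le_add, div_add' _ _ _ hut.ne', div_le_div_iff_of_pos_right hut]
  linarith

/-- Midpoints are unique. -/
lemma midpoint_unique_of_proper [ProperSpace X] (hgeo : IsGeodesicSpace X) (hpt : IsPtolemy X)
    {x y m₀ m₁ : X} (h0 : dist x m₀ = dist x y / 2) (h0' : dist m₀ y = dist x y / 2)
    (h1 : dist x m₁ = dist x y / 2) (h1' : dist m₁ y = dist x y / 2) : m₀ = m₁ := by
  by_contra hne
  obtain ⟨l, hl⟩ : ∃ l, l = dist x y / 2 := ⟨_, rfl⟩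
  have hxy : dist x y = 2 * l := by linarith
  rw [← hl] at h0 h0' h1 h1'
  have ha : 0 < dist m₀ m₁ := dist_pos.2 hne
  have hl0 : 0 < l := by
    linarith [dist_triangle_left m₀ m₁ x]
  obtain ⟨p, hp0, hp1, hp⟩ := hgeo.exists_geodesic x m₀
  obtain ⟨q, hq0, hq1, hq⟩ := hgeo.exists_geodesic x m₁
  rw [h0] at hp
  rw [h1] at hq
  have hzero : (0 : ℝ) ∈ Set.Icc (0 : ℝ) 1 := by norm_num
  have hone : (1 : ℝ) ∈ Set.Icc (0 : ℝ) 1 := by norm_num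
  -- Distances from `x` and `y`, and to the end point, for either geodesic.
  have level : ∀ {c : ℝ → X} {m : X}, c 0 = x → c 1 = m → dist m y = l →
      (∀ s ∈ Set.Icc (0 : ℝ) 1, ∀ t ∈ Set.Icc (0 : ℝ) 1, dist (c s) (c t) = l * |s - t|) →
      ∀ t ∈ Set.Icc (0 : ℝ) 1, dist x (c t) = l * t ∧ dist (c t) m = l * (1 - t) ∧
        dist y (c t) ≤ l * (2 - t) := by
    intro c m hc0 hc1 hmy hc t ht
    have e1 : dist x (c t) = l * t := by
      rw [← hc0, hc 0 hzero t ht, zero_sub, abs_neg, abs_of_nonneg ht.1]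
    have e2 : dist (c t) m = l * (1 - t) := by
      rw [← hc1, hc t ht 1 hone, abs_sub_comm, abs_of_nonneg (by linarith [ht.2])]
    refine ⟨e1, e2, ?_⟩
    have := dist_triangle (c t) m y
    rw [dist_comm y]
    linarith
  have hpl := level hp0 hp1 h0' hp
  have hql := level hq0 hq1 h1' hq
  choose w hw1 hw2 using fun t => hgeo.exists_midpoint (p t) (q t)
  have hxw : ∀ t ∈ Set.Icc (0 : ℝ) 1, dist x (w t) = l * t := by
    intro t ht
    obtain ⟨a1, -, a3⟩ := hpl t ht
    obtain ⟨b1, -, b3⟩ := hql t ht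
    have c1 := hpt.dist_midpoint_le (z := x) (hw1 t) (hw2 t)
    have c2 := hpt.dist_midpoint_le (z := y) (hw1 t) (hw2 t)
    have c3 := dist_triangle_right x y (w t)
    linarith
  set a := dist m₀ m₁
  -- For `t` with `l * (1 - t) ≤ a / 4` the points `p t` and `q t` are at least `a / 2` apart.
  have hr : ∀ t ∈ Set.Icc (0 : ℝ) 1, l * (1 - t) ≤ a / 4 → a / 4 ≤ dist (p t) (w t) := by
    intro t ht hta
    have e1 := (hpl t ht).2.1
    have e2 := (hql t ht).2.1
    have := dist_triangle4 m₀ (p t) (q t) m₁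
    rw [dist_comm m₀ (p t)] at this
    rw [hw1]
    linarith
  -- An increasing sequence of parameters converging to `1`.
  let T : ℕ → ℝ := fun n => 1 - 1 / ((n : ℝ) + 1)
  have hT : StrictMono T := fun i j hij => by
    have hij' : (i : ℝ) < j := by exact_mod_cast hij
    have : 1 / ((j : ℝ) + 1) < 1 / ((i : ℝ) + 1) := by gcongr
    simp only [T]; linarith
  have hTmem : ∀ n, T n ∈ Set.Icc (0 : ℝ) 1 := fun n => by
    have h1 : (0 : ℝ) ≤ 1 / ((n : ℝ) + 1) := by positivity
    have h2 : 1 / ((n : ℝ) + 1) ≤ 1 := by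
      rw [div_le_one (by positivity)]; linarith [n.cast_nonneg (α := ℝ)]
    constructor <;> simp only [T] <;> linarith
  have hTlim : Tendsto (fun n => l * (1 - T n)) atTop (𝓝 0) := by
    have := (tendsto_one_div_add_atTop_nhds_zero_nat (𝕜 := ℝ)).const_mul l
    simpa [T] using this
  obtain ⟨z, -, φ, hφ, hz⟩ := tendsto_subseq_of_bounded (x := fun n => w (T n))
    (Metric.isBounded_closedBall (x := x) (r := l)) (fun n => by
      rw [Metric.mem_closedBall, dist_comm, hxw _ (hTmem n)]
      nlinarith [(hTmem n).2])
  set ρ := a / 4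
  have hρ : 0 < ρ := by positivity
  obtain ⟨N₁, hN₁⟩ := Metric.cauchySeq_iff.1 hz.cauchySeq (ρ ^ 2 / (4 * l)) (by positivity)
  obtain ⟨N₂, hN₂⟩ := eventually_atTop.1
    ((hTlim.comp hφ.tendsto_atTop).eventually_le_const hρ)
  let t : ℕ → ℝ := fun n => T (φ (n + max N₁ N₂))
  have ht : ∀ n, t n < t (n + 1) := fun n => hT (hφ (by omega))
  have htmem : ∀ n, t n ∈ Set.Icc (0 : ℝ) 1 := fun n => hTmem _
  have hclose : ∀ n, dist (w (t n)) (w (t (n + 1))) ≤ ρ ^ 2 / (4 * l) := fun n =>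
    (hN₁ _ (by have := le_max_left N₁ N₂; omega) _ (by have := le_max_left N₁ N₂; omega)).le
  have hfar : ∀ n, ρ ≤ dist (p (t n)) (w (t n)) := fun n =>
    hr _ (htmem n) (hN₂ _ (by have := le_max_right N₁ N₂; omega))
  let S : ℕ → ℝ := fun n =>
    (dist (p (t (n + 1))) (w (t (n + 1))) - dist (p (t n)) (w (t (n + 1)))) / (t (n + 1) - t n)
  have hstep : ∀ n, S n + ρ / 2 ≤ S (n + 1) := fun n => by
    have k1 := hpt.slope_kink hl0 hp (htmem n).1 (ht n) (ht (n + 1)) (htmem (n + 2)).2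
      (q := q (t (n + 1))) (w := w (t (n + 1))) (r := dist (p (t (n + 1))) (w (t (n + 1))))
      (by rw [hp0]; exact (hql _ (htmem _)).1) (by rw [hp0]; exact hxw _ (htmem _)) rfl
      (by rw [hw1, hw2]) (by rw [hw1]; ring)
    have k2 := hpt.slope_stable hl0 hp (htmem (n + 1)).1 (ht (n + 1)) (htmem (n + 2)).2 hρ
      (hfar (n + 1)) (hclose (n + 1))
    have k3 := hfar (n + 1)
    simp only [S]
    linarith
  have hgrow : ∀ n : ℕ, S 0 + n * (ρ / 2) ≤ S n := fun n => by
    induction n with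
    | zero => simp
    | succ k ih => have := hstep k; push_cast; linarith
  have hbound : ∀ n, S n ≤ l := fun n => by
    have hpos : 0 < t (n + 1) - t n := sub_pos.2 (ht n)
    simp only [S]
    rw [div_le_iff₀ hpos, ← abs_of_pos hpos, ← hp _ (htmem _) _ (htmem _)]
    exact (le_abs_self _).trans (abs_dist_sub_le _ _ _)
  obtain ⟨n, hn⟩ := exists_nat_gt ((l - S 0) / (ρ / 2))
  rw [div_lt_iff₀ (by positivity)] at hn
  linarith [hgrow n, hbound n]

end Aux

/-- **Corollary 2.3.** In a proper geodesic Ptolemy metric space any two points `x, y` have a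
unique midpoint `m(x,y)`, and the midpoint map `m : X × X → X` is continuous. -/
theorem unique_continuous_midpoints_of_proper_geodesic_ptolemy
    {X : Type*} [MetricSpace X] [ProperSpace X]
    (hgeo : IsGeodesicSpace X) (hpt : IsPtolemy X) :
    ∃ m : X × X → X, Continuous m ∧
      ∀ x y z : X,
        (dist x z = dist x y / 2 ∧ dist z y = dist x y / 2) ↔ z = m (x, y) := by
  choose m hm1 hm2 using fun z : X × X => hgeo.exists_midpoint z.1 z.2
  have huniq : ∀ x y z : X,
      (dist x z = dist x y / 2 ∧ dist z y = dist x y / 2) ↔ z = m (x, y) := fun x y z =>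
    ⟨fun h => midpoint_unique_of_proper hgeo hpt h.1 h.2 (hm1 (x, y)) (hm2 (x, y)),
      by rintro rfl; exact ⟨hm1 (x, y), hm2 (x, y)⟩⟩
  refine ⟨m, continuous_iff_seqContinuous.2 fun u z hu => ?_, huniq⟩
  refine tendsto_of_subseq_tendsto fun ns hns => ?_
  have hu1 : Tendsto (fun n => (u (ns n)).1) atTop (𝓝 z.1) :=
    (continuous_fst.tendsto z).comp (hu.comp hns)
  have hu2 : Tendsto (fun n => (u (ns n)).2) atTop (𝓝 z.2) :=
    (continuous_snd.tendsto z).comp (hu.comp hns)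
  -- The midpoints stay in a bounded set: their distances to the first coordinates converge.
  have hd := (hu1.dist hu2).div_const 2
  obtain ⟨R, hR⟩ := ((hu1.dist (tendsto_const_nhds (x := z.1))).add hd).bddAbove_range
  obtain ⟨w, -, φ, hφ, hw⟩ := tendsto_subseq_of_bounded (x := fun n => m (u (ns n)))
    (Metric.isBounded_closedBall (x := z.1) (r := R)) (fun n => by
      have h1 := hR ⟨n, rfl⟩
      have h2 := dist_triangle_left (m (u (ns n))) z.1 (u (ns n)).1
      have h3 := hm1 (u (ns n))
      rw [Metric.mem_closedBall]
      dsimp only at h1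
      linarith)
  refine ⟨φ, ?_⟩
  have hφ' := hφ.tendsto_atTop
  have hw' : w = m (z.1, z.2) := (huniq _ _ _).1
    ⟨tendsto_nhds_unique ((hu1.comp hφ').dist hw)
      ((hd.comp hφ').congr fun n => (hm1 (u (ns (φ n)))).symm),
     tendsto_nhds_unique (hw.dist (hu2.comp hφ'))
      ((hd.comp hφ').congr fun n => (hm2 (u (ns (φ n)))).symm)⟩
  rw [hw'] at hw
  exact hw
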